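/- Let n ≥ 2 and q ≥ 1 be integers and ξ a real number. For t = 0, 1, …, n+q−3 define the q×q real matrix B(t) = I_q + ξ·Σ_{i=1}^{q−1} χ(i ≤ t ≤ i+n−2)·e_{i+1}e_iᵀ. Then the ordered product Π = B(n+q−3)·B(n+q−4)···B(0) is lower triangular with Π_{i,i} = 1 for all i, Π_{i,j} = 0 for i < j, and Π_{i,j} = ξ^{i−j}·C(i−j+n−2, n−2) for i > j, where C(a,b) denotes the binomial coefficient. -/

import Mathlib

/-- The standard basis vectors of `ℝ^q`, numbered `1, …, q` (with `e 0 = 0` and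
`e j = 0` for `j > q` by convention). -/
noncomputable def eVec (q : ℕ) (j : ℕ) : Fin q → ℝ :=
  if h : 1 ≤ j ∧ j ≤ q then Pi.single (⟨j - 1, by omega⟩ : Fin q) 1 else 0

/-- The matrix `B(t) = I_q + ξ Σ_{i=1}^{q-1} χ(i ≤ t ≤ i+n-2) e_{i+1} e_iᵀ`. -/
noncomputable def Bmat (n q : ℕ) (ξ : ℝ) (t : ℕ) : Matrix (Fin q) (Fin q) ℝ :=
  1 + ξ • ∑ i ∈ Finset.Icc 1 (q - 1),
    (if i ≤ t ∧ t ≤ i + n - 2 then (1 : ℝ) else 0) •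
      Matrix.vecMulVec (eVec q (i + 1)) (eVec q i)

/-- The ordered (time-decreasing) product `B(T-1) ⬝ B(T-2) ⬝ ⋯ ⬝ B(0)`. -/
noncomputable def prodRev {q : ℕ} (B : ℕ → Matrix (Fin q) (Fin q) ℝ) :
    ℕ → Matrix (Fin q) (Fin q) ℝ
  | 0 => 1
  | t + 1 => B t * prodRev B t

/-!
Left multiplication by `B(t)` adds `ξ` times row `i - 1` to row `i`, for each row `i` whose window
`i ≤ t ≤ i + n - 2` contains `t` (rows counted from `0`). Hence the entry `(i, j)` of
`B(T-1)⋯B(0)` is `ξ ^ (i - j)` times the number of choices of times `t_{j+1} < ⋯ < t_i < T` with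
`t_k` in the window of row `k`. Writing `t_k = k + s_k`, the `s_k` form a weakly increasing
sequence with values below `min (n - 1) (T - i)`, so there are
`multichoose (min (n - 1) (T - i)) (i - j)` of them. In the induction on `T`, Pascal's rule for
`multichoose` is the case distinction `t_i < T` or `t_i = T`.
-/

section UnitLowerBidiagonal

variable {R : Type*} [NonAssocSemiring R] {m : ℕ}

/-- The square matrix with `1` on the diagonal, `c` on the subdiagonal and `0` elsewhere, the
common shape of all the `B(t)`. It is indexed by `Fin (m + 1)` so that the subdiagonal is
indexed by `Fin m`. -/
def unitLowerBidiagonal (c : Fin m → R) : Matrix (Fin (m + 1)) (Fin (m + 1)) R :=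
  1 + ∑ k, Matrix.single k.succ k.castSucc (c k)

namespace unitLowerBidiagonal

variable {ι : Type*}

theorem mul_apply_zero (c : Fin m → R) (M : Matrix (Fin (m + 1)) ι R) (j : ι) :
    (unitLowerBidiagonal c * M) 0 j = M 0 j := by
  have row_eq_zero (k : Fin m) : (Matrix.single k.succ k.castSucc (c k) * M) 0 j = 0 :=
    Matrix.single_mul_apply_of_ne _ _ _ _ _ k.succ_ne_zero.symm _
  simp only [unitLowerBidiagonal, Matrix.add_mul, Matrix.one_mul, Matrix.sum_mul,
    Matrix.add_apply, Matrix.sum_apply, row_eq_zero, Finset.sum_const_zero, add_zero]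

theorem mul_apply_succ (c : Fin m → R) (M : Matrix (Fin (m + 1)) ι R) (i : Fin m) (j : ι) :
    (unitLowerBidiagonal c * M) i.succ j = M i.succ j + c i * M i.castSucc j := by
  have row_eq_zero (k : Fin m) (hk : k ≠ i) :
      (Matrix.single k.succ k.castSucc (c k) * M) i.succ j = 0 :=
    Matrix.single_mul_apply_of_ne _ _ _ _ _ (by simpa using hk.symm) _
  rw [unitLowerBidiagonal, Matrix.add_mul, Matrix.one_mul, Matrix.sum_mul, Matrix.add_apply,
    Matrix.sum_apply, Fintype.sum_eq_single i row_eq_zero, Matrix.single_mul_apply_same]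

end unitLowerBidiagonal

end UnitLowerBidiagonal

theorem eVec_val_add_one {q : ℕ} (a : Fin q) : eVec q (a + 1) = Pi.single a 1 := by
  simp [eVec]

theorem Bmat_eq_unitLowerBidiagonal (n m : ℕ) (ξ : ℝ) (t : ℕ) :
    Bmat n (m + 1) ξ t =
      unitLowerBidiagonal fun k : Fin m =>
        if (k : ℕ) + 1 ≤ t ∧ t ≤ (k : ℕ) + 1 + n - 2 then ξ else 0 := by
  have eVec_castSucc (k : Fin m) : eVec (m + 1) (k + 1) = Pi.single k.castSucc 1 :=
    eVec_val_add_one k.castSucc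
  have eVec_succ (k : Fin m) : eVec (m + 1) (k + 1 + 1) = Pi.single k.succ 1 :=
    eVec_val_add_one k.succ
  have sum_Icc_eq (f : ℕ → Matrix (Fin (m + 1)) (Fin (m + 1)) ℝ) :
      ∑ i ∈ Finset.Icc 1 m, f i = ∑ k : Fin m, f (k + 1) := by
    rw [Fin.sum_univ_eq_sum_range (fun k => f (k + 1)), Finset.range_eq_Ico,
      Finset.sum_Ico_add', Nat.zero_add, Finset.Ico_add_one_right_eq_Icc]
  rw [Bmat, unitLowerBidiagonal, Nat.add_sub_cancel, sum_Icc_eq, Finset.smul_sum]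
  congr! 2 with k
  rw [eVec_castSucc, eVec_succ, ← Matrix.single_eq_single_vecMulVec_single,
    Matrix.smul_single, Matrix.smul_single, smul_eq_mul, smul_eq_mul, mul_one, mul_ite, mul_one,
    mul_zero]

section WindowEntry

variable {R : Type*} [CommSemiring R]

/-- The closed form of the entry `(i, j)` of the partial product `B(T-1)⋯B(0)`, with `i` and `j`
counted from `0`. The indices are natural numbers, so that the recurrence in `T` and `i` can be
stated without reference to the size of the matrix. -/
def windowEntry (n : ℕ) (ξ : R) (T i j : ℕ) : R :=
  if j ≤ i then ξ ^ (i - j) * (Nat.multichoose (min (n - 1) (T - i)) (i - j) : R) else 0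

namespace windowEntry

variable (n : ℕ) (ξ : R) (T : ℕ)

theorem eq_zero_of_lt {i j : ℕ} (h : i < j) : windowEntry n ξ T i j = 0 :=
  if_neg h.not_ge

theorem self (i : ℕ) : windowEntry n ξ T i i = 1 := by
  simp [windowEntry]

theorem add_left (j d : ℕ) :
    windowEntry n ξ T (j + d) j =
      ξ ^ d * (Nat.multichoose (min (n - 1) (T - (j + d))) d : R) := by
  simp [windowEntry]

theorem time_zero (i j : ℕ) : windowEntry n ξ 0 i j = if i = j then 1 else 0 := by
  rcases lt_trichotomy i j with h | rfl | h
  · rw [eq_zero_of_lt _ _ _ h, if_neg h.ne]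
  · rw [self, if_pos rfl]
  · rw [if_neg h.ne']
    obtain ⟨d, rfl⟩ := Nat.exists_eq_add_of_lt h
    rw [Nat.add_assoc, add_left, Nat.zero_sub, Nat.min_zero, Nat.multichoose_zero_succ,
      Nat.cast_zero, mul_zero]

theorem row_zero (j : ℕ) : windowEntry n ξ T 0 j = if j = 0 then 1 else 0 := by
  cases j with
  | zero => rw [self, if_pos rfl]
  | succ j => rw [eq_zero_of_lt _ _ _ j.succ_pos, if_neg j.succ_ne_zero]

theorem succ_of_mem_window {i : ℕ} (j : ℕ) (h : i + 1 ≤ T ∧ T ≤ i + 1 + n - 2) :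
    windowEntry n ξ (T + 1) (i + 1) j =
      windowEntry n ξ T (i + 1) j + ξ * windowEntry n ξ T i j := by
  rcases lt_trichotomy (i + 1) j with hij | rfl | hij
  · simp only [eq_zero_of_lt _ _ _ hij, eq_zero_of_lt _ _ _ (Nat.lt_of_succ_lt hij), mul_zero,
      add_zero]
  · rw [self, self, eq_zero_of_lt _ _ _ i.lt_succ_self, mul_zero, add_zero]
  · obtain ⟨d, rfl⟩ := Nat.exists_eq_add_of_le (Nat.le_of_lt_succ hij)
    have min_now : min (n - 1) (T - (j + (d + 1))) = T - (j + (d + 1)) := by omega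
    have min_next : min (n - 1) (T + 1 - (j + (d + 1))) = T - (j + (d + 1)) + 1 := by omega
    have min_above : min (n - 1) (T - (j + d)) = T - (j + (d + 1)) + 1 := by omega
    rw [Nat.add_assoc, add_left, add_left, add_left, min_now, min_next, min_above,
      Nat.multichoose_succ_succ, Nat.cast_add]
    ring

theorem succ_of_notMem_window {i : ℕ} (j : ℕ) (h : ¬(i + 1 ≤ T ∧ T ≤ i + 1 + n - 2)) :
    windowEntry n ξ (T + 1) (i + 1) j = windowEntry n ξ T (i + 1) j := by
  have min_eq : min (n - 1) (T + 1 - (i + 1)) = min (n - 1) (T - (i + 1)) := by omega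
  rw [windowEntry, windowEntry, min_eq]

end windowEntry

end WindowEntry

theorem prodRev_Bmat_apply (n m : ℕ) (ξ : ℝ) (T : ℕ) (i j : Fin (m + 1)) :
    prodRev (Bmat n (m + 1) ξ) T i j = windowEntry n ξ T i j := by
  induction T generalizing i with
  | zero => simp only [prodRev, Matrix.one_apply, windowEntry.time_zero, Fin.ext_iff]
  | succ T ih =>
    rw [prodRev, Bmat_eq_unitLowerBidiagonal]
    cases i using Fin.cases with
    | zero =>
      rw [unitLowerBidiagonal.mul_apply_zero, ih, Fin.val_zero, windowEntry.row_zero,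
        windowEntry.row_zero]
    | succ i =>
      rw [unitLowerBidiagonal.mul_apply_succ, ih, ih, Fin.val_succ, Fin.val_castSucc]
      split_ifs with h
      · rw [windowEntry.succ_of_mem_window n ξ T j h]
      · rw [windowEntry.succ_of_notMem_window n ξ T j h, zero_mul, add_zero]

/-- The product `Π = B(n+q-3)⋯B(0)` is lower triangular, with unit diagonal and
`Π_{i,j} = ξ^{i-j} C(i-j+n-2, n-2)` below the diagonal. Rows and columns of
`Fin q` are numbered from `0`, corresponding to indices `1, …, q` of the paper. -/
theorem B_product_entries
    (n q : ℕ) (hn : 2 ≤ n) (hq : 1 ≤ q) (ξ : ℝ) :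
    ∀ i j : Fin q,
      (i = j → prodRev (Bmat n q ξ) (n + q - 2) i j = 1) ∧
      ((i : ℕ) < (j : ℕ) → prodRev (Bmat n q ξ) (n + q - 2) i j = 0) ∧
      ((j : ℕ) < (i : ℕ) → prodRev (Bmat n q ξ) (n + q - 2) i j =
        ξ ^ ((i : ℕ) - (j : ℕ)) *
          (Nat.choose ((i : ℕ) - (j : ℕ) + n - 2) (n - 2) : ℝ)) := by
  obtain ⟨m, rfl⟩ := Nat.exists_eq_add_of_le' hq
  intro i j
  rw [prodRev_Bmat_apply]
  refine ⟨?_, windowEntry.eq_zero_of_lt n ξ _, fun hji => ?_⟩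
  · rintro rfl
    exact windowEntry.self n ξ _ i
  · obtain ⟨d, hd⟩ := Nat.exists_eq_add_of_le hji.le
    have min_full : min (n - 1) (n + (m + 1) - 2 - (j + d)) = n - 1 := by omega
    rw [hd, windowEntry.add_left, min_full, Nat.add_sub_cancel_left, Nat.multichoose_eq,
      show n - 1 + d - 1 = d + (n - 2) by omega, Nat.add_sub_assoc hn, Nat.choose_symm_add]
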